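/- Over an algebraically closed field k, every n×n matrix is similar to a symmetric matrix. -/

import Mathlib

open Polynomial in
/-- A `k[X]`-module carries a nondegenerate symmetric `k`-bilinear form for which multiplication
by `X` is self-adjoint. -/
def HasForm (k : Type*) [Field k] (N : Type*) [AddCommGroup N] [Module k[X] N] : Prop :=
  ∃ β : N → N → k, (∀ a b c, β (a + b) c = β a c + β b c) ∧ (∀ a b, β a b = β b a) ∧
    (∀ (c : k) a b, β ((C c : k[X]) • a) b = c * β a b) ∧
    (∀ a b, β ((X : k[X]) • a) b = β a ((X : k[X]) • b)) ∧
    ∀ a, (∀ b, β a b = 0) → a = 0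

open Polynomial in
theorem hasForm_quot_monic {k : Type*} [Field k] (q : k[X]) (hq : q.Monic) :
    HasForm k (k[X] ⧸ (Submodule.span k[X] {q})) := by
  set I := Submodule.span k[X] {q} with hI
  have hsurj : Function.Surjective (Submodule.Quotient.mk (p := I)) :=
    Submodule.Quotient.mk_surjective I
  let s := Function.surjInv hsurj
  have hs : ∀ a, Submodule.Quotient.mk (s a) = a := Function.surjInv_eq hsurj
  let l : k[X] → k := fun f => (f %ₘ q).coeff (q.natDegree - 1)
  have hl : ∀ f g, q ∣ f - g → l f = l g := by
    intro f g h
    have := (modByMonic_eq_zero_iff_dvd hq).2 h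
    rw [sub_modByMonic, sub_eq_zero] at this
    simp [l, this]
  have hmk : ∀ f : k[X], q ∣ s (Submodule.Quotient.mk f) - f := by
    intro f
    have := hs (Submodule.Quotient.mk f)
    rw [Submodule.Quotient.eq] at this
    exact Ideal.mem_span_singleton.1 this
  let β : k[X] ⧸ I → k[X] ⧸ I → k := fun a b => l (s a * s b)
  have hβ : ∀ f g : k[X], β (Submodule.Quotient.mk f) (Submodule.Quotient.mk g) = l (f * g) := by
    intro f g
    apply hl
    obtain ⟨u, hu⟩ := hmk f
    obtain ⟨v, hv⟩ := hmk g
    rw [sub_eq_iff_eq_add] at hu hv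
    rw [hu, hv]
    exact ⟨u * (q * v + g) + f * v, by ring⟩
  refine ⟨β, ?_, ?_, ?_, ?_, ?_⟩
  · intro a b c
    obtain ⟨a, rfl⟩ := hsurj a
    obtain ⟨b, rfl⟩ := hsurj b
    obtain ⟨c, rfl⟩ := hsurj c
    rw [← Submodule.Quotient.mk_add, hβ, hβ, hβ]
    simp [l, add_mul, add_modByMonic]
  · intro a b
    simp [β, mul_comm]
  · intro c a b
    obtain ⟨a, rfl⟩ := hsurj a
    obtain ⟨b, rfl⟩ := hsurj b
    rw [← Submodule.Quotient.mk_smul, hβ, hβ]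
    simp only [l, smul_eq_mul, mul_assoc]
    rw [← smul_eq_C_mul, smul_modByMonic]
    simp
  · intro a b
    obtain ⟨a, rfl⟩ := hsurj a
    obtain ⟨b, rfl⟩ := hsurj b
    rw [← Submodule.Quotient.mk_smul, ← Submodule.Quotient.mk_smul, hβ, hβ]
    congr 1
    simp only [smul_eq_mul]
    ring
  · intro a h
    obtain ⟨f, rfl⟩ := hsurj a
    have hfr : Submodule.Quotient.mk (p := I) f = Submodule.Quotient.mk (f %ₘ q) := by
      rw [Submodule.Quotient.eq]
      refine Ideal.mem_span_singleton.2 ⟨f /ₘ q, ?_⟩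
      rw [sub_eq_iff_eq_add, add_comm]
      exact (modByMonic_add_div f q).symm
    rw [hfr] at h ⊢
    by_cases hr : f %ₘ q = 0
    · rw [hr]; rfl
    exfalso
    have hd : (f %ₘ q).natDegree < q.natDegree := by
      apply natDegree_lt_natDegree hr
      exact degree_modByMonic_lt f hq
    set r := f %ₘ q
    have h1 := h (Submodule.Quotient.mk (X ^ (q.natDegree - 1 - r.natDegree)))
    rw [hβ] at h1
    have h2 : (r * X ^ (q.natDegree - 1 - r.natDegree)) %ₘ q =
        r * X ^ (q.natDegree - 1 - r.natDegree) := by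
      rw [modByMonic_eq_self_iff hq]
      apply degree_lt_degree
      rw [natDegree_mul hr (by simp)]
      simp
      omega
    simp only [l] at h1
    rw [h2, coeff_mul_X_pow'] at h1
    rw [if_pos (by omega), show q.natDegree - 1 - (q.natDegree - 1 - r.natDegree) = r.natDegree by
      omega] at h1
    simp [hr] at h1

open Polynomial in
theorem hasForm_quot {k : Type*} [Field k] (q : k[X]) (hq : q ≠ 0) :
    HasForm k (k[X] ⧸ (Submodule.span k[X] {q})) := by
  classical
  have : Submodule.span k[X] {q} = Submodule.span k[X] {normalize q} :=
    Ideal.span_singleton_eq_span_singleton.2 (associated_normalize q)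
  rw [this]
  exact hasForm_quot_monic _ (monic_normalize hq)

open Polynomial in
theorem HasForm.congr {k : Type*} [Field k] {N N' : Type*} [AddCommGroup N] [Module k[X] N]
    [AddCommGroup N'] [Module k[X] N'] (e : N' ≃ₗ[k[X]] N) (h : HasForm k N) : HasForm k N' := by
  obtain ⟨β, h1, h2, h3, h4, h5⟩ := h
  refine ⟨fun a b => β (e a) (e b), ?_, ?_, ?_, ?_, ?_⟩
  · intro a b c; simp [h1]
  · intro a b; exact h2 _ _
  · intro c a b; simp only [map_smul, h3]
  · intro a b; simp only [map_smul, h4]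
  · intro a h
    apply e.injective
    rw [map_zero]
    apply h5
    intro b
    simpa using h (e.symm b)

open Polynomial in
theorem HasForm.pi {k : Type*} [Field k] {ι : Type*} [Fintype ι] {N : ι → Type*}
    [∀ i, AddCommGroup (N i)] [∀ i, Module k[X] (N i)]
    (h : ∀ i, HasForm k (N i)) : HasForm k (∀ i, N i) := by
  classical
  choose β h1 h2 h3 h4 h5 using h
  have h0 : ∀ i a, β i a 0 = 0 := by
    intro i a
    rw [h2]
    simpa using h3 i 0 0 a
  refine ⟨fun a b => ∑ i, β i (a i) (b i), ?_, ?_, ?_, ?_, ?_⟩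
  · intro a b c; simp [h1, Finset.sum_add_distrib]
  · intro a b; exact Finset.sum_congr rfl fun i _ => h2 i _ _
  · intro c a b; simp only [Pi.smul_apply, h3, Finset.mul_sum]
  · intro a b; simp only [Pi.smul_apply, h4]
  · intro a h
    funext i
    apply h5
    intro b
    have : ∑ j, β j (a j) ((Pi.single i b : ∀ i, N i) j) = 0 := h (Pi.single i b)
    rw [Finset.sum_eq_single i] at this
    · simpa using this
    · intro j _ hj
      rw [Pi.single_eq_of_ne hj, h0]
    · simp

open Polynomial in
theorem hasForm_aeval {k : Type*} [Field k] {V : Type*} [AddCommGroup V] [Module k V]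
    [FiniteDimensional k V] (T : Module.End k V) : HasForm k (Module.AEval k V T) := by
  classical
  obtain ⟨ι, _, p, hp, e, ⟨f⟩⟩ := Module.equiv_directSum_of_isTorsion
    (Module.AEval.isTorsion_of_finiteDimensional k V T)
  refine HasForm.congr (f.trans (DirectSum.linearEquivFunOnFintype k[X] ι _)) ?_
  exact HasForm.pi fun i => hasForm_quot _ (pow_ne_zero _ (hp i).ne_zero)

open Polynomial in
theorem exists_form {k : Type*} [Field k] {V : Type*} [AddCommGroup V] [Module k V]
    [FiniteDimensional k V] (T : Module.End k V) :
    ∃ B : LinearMap.BilinForm k V, B.IsSymm ∧ B.Nondegenerate ∧ ∀ x y, B (T x) y = B x (T y) := by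
  obtain ⟨β, h1, h2, h3, h4, h5⟩ := hasForm_aeval T
  let o := Module.AEval.of k V T
  have h3' : ∀ (c : k) (a b : V), β (o (c • a)) (o b) = c * β (o a) (o b) := by
    intro c a b
    rw [← h3, Module.AEval.C_smul, map_smul]
  let B : LinearMap.BilinForm k V := LinearMap.mk₂ k (fun x y => β (o x) (o y))
    (by intro a b c; simp [h1]) (by intro c a b; rw [h3', smul_eq_mul])
    (by intro a b c; rw [h2, map_add, h1, h2 _ (o a), h2 _ (o a)])
    (by intro c a b; rw [h2, h3', h2]; simp)
  have hB : ∀ x y, B x y = β (o x) (o y) := fun x y => rfl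
  have hs : B.IsSymm := ⟨fun x y => by simp only [hB]; exact h2 _ _⟩
  refine ⟨B, hs, ?_, ?_⟩
  · have hl : B.SeparatingLeft := by
      intro x hx
      apply o.injective
      rw [map_zero]
      apply h5
      intro b
      have := hx (o.symm b)
      rw [hB] at this
      simpa using this
    exact ⟨hl, fun x hx => hl x fun y => by rw [← hx y]; exact h2 _ _⟩
  · intro x y
    have := h4 (o x) (o y)
    rw [Module.AEval.X_smul_of, Module.AEval.X_smul_of] at this
    exact this

/-- Correct an alternating form using an eigenvector of the adjoint. -/
theorem exists_form' {k : Type*} [Field k] [IsAlgClosed k] {V : Type*} [AddCommGroup V]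
    [Module k V] [FiniteDimensional k V] [Nontrivial V] (T : Module.End k V) :
    ∃ B : LinearMap.BilinForm k V, B.IsSymm ∧ B.Nondegenerate ∧
      (∀ x y, B (T x) y = B x (T y)) ∧ ∃ v, B v v ≠ 0 := by
  obtain ⟨B, hs, hn, hT⟩ := exists_form T
  by_cases hv : ∃ v, B v v ≠ 0
  · exact ⟨B, hs, hn, hT, hv⟩
  push Not at hv
  obtain ⟨c, hc⟩ := Module.End.exists_eigenvalue T
  obtain ⟨w, hw⟩ := hc.exists_hasEigenvector
  have hw0 : w ≠ 0 := hw.2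
  have hTw : T w = c • w := hw.apply_eq_smul
  have hφ : ∀ x, B w (T x) = c * B w x := by
    intro x
    rw [← hT, hTw]; simp
  let B' : LinearMap.BilinForm k V := B + LinearMap.mk₂ k (fun x y => B w x * B w y)
    (by intro a b c; simp [add_mul]) (by intro c a b; simp [mul_assoc])
    (by intro a b c; simp [mul_add]) (by intro c a b; simp; ring)
  have hB' : ∀ x y, B' x y = B x y + B w x * B w y := fun x y => rfl
  have hsy : ∀ x y, B' x y = B' y x := by
    intro x y
    rw [hB', hB', hs.eq x y |>.symm, mul_comm]
  refine ⟨B', ⟨hsy⟩, ?_, ?_, ?_⟩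
  · have hl : B'.SeparatingLeft := by
      intro x hx
      have e1 : B w x = 0 := by
        have := hx w
        rw [hB', hv w, mul_zero, add_zero] at this
        rw [← this]; exact hs.eq _ _
      apply hn.1
      intro y
      have := hx y
      rw [hB', e1] at this
      simpa using this
    exact ⟨hl, fun x hx => hl x fun y => by rw [← hx y]; exact hsy _ _⟩
  · intro x y
    rw [hB', hB', hT, hφ, hφ]; ring
  · by_contra! hcon
    apply hw0
    apply hn.1
    intro y
    have := hcon y
    rw [hB', hv, zero_add] at this
    simpa using this

theorem exists_orthonormal {k : Type*} [Field k] [IsAlgClosed k] (n : ℕ) :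
    ∀ {V : Type*} [AddCommGroup V] [Module k V] [FiniteDimensional k V]
    (_ : Module.finrank k V = n) (B : LinearMap.BilinForm k V) (_ : B.IsSymm)
    (_ : B.Nondegenerate) (_ : n ≠ 0 → ∃ v, B v v ≠ 0),
    ∃ b : Fin n → V, ∀ i j, B (b i) (b j) = if i = j then 1 else 0 := by
  induction n with
  | zero => intro V _ _ _ _ B _ _ _; exact ⟨Fin.elim0, fun i => i.elim0⟩
  | succ n ih =>
    intro V _ _ _ hdim B hs hn hv
    have hsy : ∀ x y, B x y = B y x := fun x y => hs.eq x y
    -- an anisotropic unit vector whose complement is zero or non-alternating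
    obtain ⟨v, hv1, hv2⟩ : ∃ v, B v v = 1 ∧
        (n ≠ 0 → ∃ u, B v u = 0 ∧ B u u ≠ 0) := by
      obtain ⟨v₀, hv₀⟩ := hv (by omega)
      obtain ⟨z, hz⟩ := IsAlgClosed.exists_pow_nat_eq (B v₀ v₀) (n := 2) (by norm_num)
      have hz0 : z ≠ 0 := by rintro rfl; apply hv₀; rw [← hz]; simp
      obtain ⟨v, hv1⟩ : ∃ v, B v v = 1 := by
        refine ⟨z⁻¹ • v₀, ?_⟩
        simp [← hz]
        field_simp
      by_cases hA : ∃ u, B v u = 0 ∧ B u u ≠ 0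
      · exact ⟨v, hv1, fun _ => hA⟩
      push Not at hA
      by_cases hn0 : n = 0
      · exact ⟨v, hv1, fun h => absurd hn0 h⟩
      -- nonzero vector in the complement
      obtain ⟨w, hw0, hvw⟩ : ∃ w, w ≠ 0 ∧ B v w = 0 := by
        have : LinearMap.ker (B v) ≠ ⊥ := by
          apply LinearMap.ker_ne_bot_of_finrank_lt
          rw [hdim, Module.finrank_self]; omega
        obtain ⟨w, hw, hw0⟩ := Submodule.exists_mem_ne_zero_of_ne_bot this
        exact ⟨w, hw0, hw⟩
      obtain ⟨u, hvu, hwu⟩ : ∃ u, B v u = 0 ∧ B w u = 1 := by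
        by_contra! hcon
        apply hw0
        apply hn.1
        intro y
        by_contra hy
        apply hcon ((B w y)⁻¹ • (y - B v y • v))
        · simp [hv1]
        · simp [hsy w v, hvw, hy]
      have hww := hA w hvw
      have huu := hA u hvu
      refine ⟨v + w, ?_, fun _ => ⟨v - u, ?_, ?_⟩⟩
      · simp [hv1, hvw, hsy w v, hww]
      · simp [hv1, hvu, hsy w v, hvw, hwu]
      · simp [hv1, hvu, hsy u v, huu]
    have hv0 : B v v ≠ 0 := by rw [hv1]; exact one_ne_zero
    set W := B.orthogonal (Submodule.span k {v}) with hW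
    have hmem : ∀ x, x ∈ W ↔ B v x = 0 := by
      intro x
      rw [hW, LinearMap.BilinForm.mem_orthogonal_iff]
      constructor
      · intro h; exact h v (Submodule.mem_span_singleton_self v)
      · intro h y hy
        obtain ⟨c, rfl⟩ := Submodule.mem_span_singleton.1 hy
        simp [h]
    have hfin : Module.finrank k W = n := by
      have h1 := Submodule.finrank_add_eq_of_isCompl
        (LinearMap.BilinForm.isCompl_span_singleton_orthogonal hv0)
      rw [finrank_span_singleton (by rintro rfl; simp at hv0), hdim, ← hW] at h1
      omega
    have hnW := LinearMap.BilinForm.restrict_nondegenerate_orthogonal_spanSingleton B hn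
      hs.isRefl hv0
    obtain ⟨b, hb⟩ := ih hfin (B.restrict W) ⟨fun x y => hs.eq _ _⟩ hnW (by
      intro h0
      obtain ⟨u, hu, hu'⟩ := hv2 h0
      exact ⟨⟨u, (hmem u).2 hu⟩, hu'⟩)
    have hb' : ∀ i j, B (b i : V) (b j) = if i = j then 1 else 0 := hb
    have hvb : ∀ i, B v (b i) = 0 := fun i => (hmem _).1 (b i).2
    refine ⟨Fin.cons v (fun i => (b i : V)), ?_⟩
    intro i j
    refine Fin.cases ?_ (fun i => ?_) i <;> refine Fin.cases ?_ (fun j => ?_) j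
    · simp [hv1]
    · simp [hvb, (Fin.succ_ne_zero j).symm]
    · simp [hsy _ v, hvb]
    · simp [hb']

/-- Over an algebraically closed field, every `n×n` matrix is similar to a
symmetric matrix. -/
theorem stmt6 {k : Type*} [Field k] [IsAlgClosed k] {n : ℕ}
    (M : Matrix (Fin n) (Fin n) k) :
    ∃ P : (Matrix (Fin n) (Fin n) k)ˣ,
      ((P : Matrix (Fin n) (Fin n) k) * M * ((P⁻¹ : (Matrix (Fin n) (Fin n) k)ˣ) :
        Matrix (Fin n) (Fin n) k)).IsSymm := by
  rcases Nat.eq_zero_or_pos n with rfl | hpos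
  · exact ⟨1, by ext i; exact i.elim0⟩
  have : Nonempty (Fin n) := ⟨⟨0, hpos⟩⟩
  obtain ⟨B, hs, hn, hT, hv⟩ := exists_form' (Matrix.toLin' M)
  obtain ⟨b, hb⟩ := exists_orthonormal n (by simp) B hs hn (fun _ => hv)
  let Q : Matrix (Fin n) (Fin n) k := Matrix.of fun i j => b j i
  let S : Matrix (Fin n) (Fin n) k := LinearMap.toMatrix₂' k B
  have hB : ∀ x y, B x y = x ⬝ᵥ (S.mulVec y) := by
    intro x y
    have : B = Matrix.toLinearMap₂' k S := by simp [S]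
    rw [this, Matrix.toLinearMap₂'_apply']
  let R : Matrix (Fin n) (Fin n) k := Q.transpose * S
  have hRQ : R * Q = 1 := by
    ext i j
    rw [Matrix.one_apply, ← hb i j, hB, Matrix.dotProduct_mulVec]
    rfl
  refine ⟨⟨R, Q, hRQ, mul_eq_one_comm.1 hRQ⟩, ?_⟩
  change (R * M * Q).IsSymm
  have key : ∀ i j, (R * M * Q) i j = B (b i) (M.mulVec (b j)) := by
    intro i j
    rw [hB, Matrix.dotProduct_mulVec, Matrix.dotProduct_mulVec]
    rfl
  ext i j
  rw [Matrix.transpose_apply, key, key]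
  have h1 := hT (b i) (b j)
  rw [Matrix.toLin'_apply, Matrix.toLin'_apply] at h1
  rw [← h1]
  exact hs.eq _ _
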